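/- arXiv:1302.6330 — 6 statements merged into one kernel-verified Lean document; each statement's English description precedes it below -/
import Mathlib

section
/- For every contract 𝒞, if C and D are both configurations of 𝒞, then C ∪ D is also a configuration of 𝒞. -/
/-!
The listing `l` of `C` followed by the listing `m` of `D` works: prefixing `m` by `l` only enlarges
the sets of predecessors, passing from `C` or `D` to `C ∪ D` only enlarges the set that supplies
circular enablings, and both relations are saturated. An event of `C ∩ D` is merely listed twice.
-/

/-- A contract: events `E`, participants `A`, ownership map `pi`, a saturated
fulfillment relation `ok`, a saturated enabling relation `en` (`⊢`) and a
saturated circular enabling relation `cen` (`⊩`). -/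
structure Contract (E A : Type) [Fintype E] [Fintype A] where
  pi : E → A
  ok : A → Set E → Prop
  ok_sat : ∀ (a : A) (X Y : Set E), ok a X → X ⊆ Y → ok a Y
  en : Set E → E → Prop
  en_sat : ∀ (X Y : Set E) (e : E), en X e → X ⊆ Y → en Y e
  cen : Set E → E → Prop
  cen_sat : ∀ (X Y : Set E) (e : E), cen X e → X ⊆ Y → cen Y e

variable {E A : Type} [Fintype E] [Fintype A]

/-- `C` is a configuration iff there is a sequence `e₀,…,eₙ` whose elements are
exactly those of `C`, where each `eᵢ` is either `⊢`-enabled by its predecessors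
or `⊩`-enabled by `C` itself. -/
def IsConfig (𝒞 : Contract E A) (C : Set E) : Prop :=
  ∃ l : List E, (∀ e, e ∈ l ↔ e ∈ C) ∧
    ∀ i : Fin l.length, 𝒞.en {e | e ∈ l.take i.1} (l.get i) ∨ 𝒞.cen C (l.get i)

/-- An event is reachable iff it belongs to some configuration. -/
def Reachable (𝒞 : Contract E A) (e : E) : Prop :=
  ∃ C, IsConfig 𝒞 C ∧ e ∈ C

section Securing

variable {α : Type*} {r s : Set α → α → Prop} {l m : List α}

/-- `l` is a securing sequence for the enabling relation `r`, in the sense of event structures: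
each entry is enabled by the set of entries before it. Repetitions are allowed. -/
def IsSecuring (r : Set α → α → Prop) (l : List α) : Prop :=
  ∀ i : Fin l.length, r {e | e ∈ l.take i} (l.get i)

theorem IsSecuring.mono (hrs : r ≤ s) (hl : IsSecuring r l) : IsSecuring s l :=
  fun i => hrs _ _ (hl i)

theorem IsSecuring.append (hr : Monotone r) (hl : IsSecuring r l) (hm : IsSecuring r m) :
    IsSecuring r (l ++ m) := by
  rintro ⟨i, hi⟩
  obtain hil | hli := lt_or_ge i l.length
  · simpa [List.getElem_append_left hil, List.take_append_of_le_length hil.le] using hl ⟨i, hil⟩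
  · obtain ⟨j, rfl⟩ := Nat.exists_eq_add_of_le hli
    have hj : j < m.length := by simpa using hi
    have predecessors_subset : {e | e ∈ m.take j} ⊆ {e | e ∈ (l ++ m).take (l.length + j)} := by
      simp +contextual [List.take_length_add_append]
    simpa using hr predecessors_subset _ (hm ⟨j, hj⟩)

end Securing

section Configuration

variable {α : Type*} {en cen : Set α → α → Prop} {C D : Set α}

/-- `C` is a finite configuration of the enabling relation `en` and the circular enabling relation
`cen` on an arbitrary type of events. Once `C` is fixed, circular enabling by `C` no longer depends
on the predecessors, so that both ways of being enabled form the single relation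
`en ⊔ fun _ => cen C`, for which `C` must be listed by a securing sequence. -/
def IsFiniteConfig (en cen : Set α → α → Prop) (C : Set α) : Prop :=
  ∃ l : List α, (∀ e, e ∈ l ↔ e ∈ C) ∧ IsSecuring (en ⊔ fun _ => cen C) l

theorem union_config_general (hen : Monotone en) (hcen : Monotone cen)
    (hC : IsFiniteConfig en cen C) (hD : IsFiniteConfig en cen D) :
    IsFiniteConfig en cen (C ∪ D) := by
  obtain ⟨l, mem_l, hl⟩ := hC
  obtain ⟨m, mem_m, hm⟩ := hD
  have enlarge {X : Set α} (hX : X ⊆ C ∪ D) :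
      (en ⊔ fun _ => cen X) ≤ en ⊔ fun _ => cen (C ∪ D) :=
    sup_le_sup_left (fun _ => hcen hX) en
  refine ⟨l ++ m, fun e => by simp [mem_l, mem_m], ?_⟩
  exact (hl.mono (enlarge Set.subset_union_left)).append (hen.sup monotone_const)
    (hm.mono (enlarge Set.subset_union_right))

end Configuration

/-- The union of two configurations is a configuration. -/
theorem union_config (𝒞 : Contract E A) (C D : Set E)
    (hC : IsConfig 𝒞 C) (hD : IsConfig 𝒞 D) : IsConfig 𝒞 (C ∪ D) :=
  union_config_general (fun _ _ hXY e he => 𝒞.en_sat _ _ e he hXY)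
    (fun _ _ hXY e he => 𝒞.cen_sat _ _ e he hXY) hC hD
end

section
/- For every contract 𝒞, if C is a configuration of 𝒞 and e is an event such that C ⊢ e or C ⊩ e, then C ∪ {e} is also a configuration of 𝒞. -/
variable {E A : Type} [Fintype E] [Fintype A]

/-- An enumeration of events in which each one is related by `R` to the set of its predecessors.
The relation stands for whichever notion of enabling is in force; repetitions are allowed. -/
def IsTrace {α : Type*} (R : Set α → α → Prop) (l : List α) : Prop :=
  ∀ i : Fin l.length, R {x | x ∈ l.take i} (l.get i)

/-- Configurations of a bare pair of enabling and circular enabling relations, on an event type that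
may be infinite. For `𝒞.en` and `𝒞.cen` this unfolds to `IsConfig 𝒞`. -/
def IsConfiguration {α : Type*} (en cen : Set α → α → Prop) (C : Set α) : Prop :=
  ∃ l : List α, (∀ x, x ∈ l ↔ x ∈ C) ∧ IsTrace (fun X x ↦ en X x ∨ cen C x) l

section Trace

variable {α : Type*} {R S : Set α → α → Prop} {l : List α}

theorem IsTrace.mono (hRS : R ≤ S) (hl : IsTrace R l) : IsTrace S l :=
  fun i ↦ hRS _ _ (hl i)

theorem IsTrace.append_singleton {a : α} (hl : IsTrace R l) (ha : R {x | x ∈ l} a) :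
    IsTrace R (l ++ [a]) := by
  rintro ⟨i, hi⟩
  have hi_le : i ≤ l.length := by simpa [Nat.lt_succ_iff] using hi
  rw [List.take_append_of_le_length hi_le]
  obtain hlt | rfl := hi_le.lt_or_eq
  · simpa only [List.get_eq_getElem, List.getElem_append_left hlt] using hl ⟨i, hlt⟩
  · simpa only [List.get_eq_getElem, List.getElem_concat_length, List.take_length] using ha

end Trace

theorem config_insert_general {α : Type*} {en cen : Set α → α → Prop} (hcen : Monotone cen)
    {C : Set α} {e : α} (hC : IsConfiguration en cen C) (he : en C e ∨ cen (C ∪ {e}) e) :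
    IsConfiguration en cen (C ∪ {e}) := by
  obtain ⟨l, hlC, hl⟩ := hC
  have hl' : IsTrace (fun X x ↦ en X x ∨ cen (C ∪ {e}) x) l :=
    hl.mono fun _ x ↦ Or.imp_right (hcen Set.subset_union_left x)
  have hl_eq : {x | x ∈ l} = C := Set.ext hlC
  exact ⟨l ++ [e], by simp [hlC, or_comm], hl'.append_singleton (hl_eq.symm ▸ he)⟩

/-- If `C` is a configuration and `C ⊢ e` or `C ⊩ e`, then `C ∪ {e}` is a
configuration. -/
theorem config_insert (𝒞 : Contract E A) (C : Set E) (e : E)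
    (hC : IsConfig 𝒞 C) (h : 𝒞.en C e ∨ 𝒞.cen C e) :
    IsConfig 𝒞 (C ∪ {e}) :=
  have hcen : Monotone 𝒞.cen := fun X Y hXY x hx ↦ 𝒞.cen_sat X Y x hx hXY
  config_insert_general hcen hC (h.imp_right (hcen Set.subset_union_left e))
end

section
/- For every contract 𝒞 and every reachable set of events X ⊆ E, there exists a configuration C of 𝒞 with X ⊆ C. -/
variable {E A : Type} [Fintype E] [Fintype A]

/-! Concatenating enumerations of two configurations enumerates their union: by saturation, an
enabling by the earlier events survives when further events are put in front, and a circular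
enabling survives when the configuration grows. As `E` has only finitely many subsets, the union of
all configurations, which is the set of all reachable events, is thus itself a configuration. -/

/-- The list `l` is justified relative to `C`: each entry is `⊢`-enabled by the entries before it or
`⊩`-enabled by `C`. This is the condition on the enumeration in `IsConfig`, with `C` not required
to be the set of entries of `l`. -/
def IsJustified (𝒞 : Contract E A) (C : Set E) (l : List E) : Prop :=
  ∀ i : Fin l.length, 𝒞.en {e | e ∈ l.take i.1} (l.get i) ∨ 𝒞.cen C (l.get i)

section

variable {𝒞 : Contract E A} {C D : Set E} {l m : List E}

theorem IsJustified.nil : IsJustified 𝒞 C [] :=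
  fun i => i.elim0

theorem IsJustified.mono (hCD : C ⊆ D) (hl : IsJustified 𝒞 C l) : IsJustified 𝒞 D l :=
  fun i => (hl i).imp_right fun h => 𝒞.cen_sat _ _ _ h hCD

theorem IsJustified.append (hl : IsJustified 𝒞 C l) (hm : IsJustified 𝒞 C m) :
    IsJustified 𝒞 C (l ++ m) := by
  rintro ⟨i, hi⟩
  rw [List.get_eq_getElem, List.take_append]
  rcases lt_or_ge i l.length with hil | hli
  · rw [List.getElem_append_left hil]
    exact (hl ⟨i, hil⟩).imp_left fun h =>
      𝒞.en_sat _ _ _ h fun _ => List.mem_append_left _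
  · have him : i - l.length < m.length := by
      rw [List.length_append] at hi
      omega
    rw [List.getElem_append_right hli]
    exact (hm ⟨i - l.length, him⟩).imp_left fun h =>
      𝒞.en_sat _ _ _ h fun _ => List.mem_append_right _

theorem IsConfig.empty : IsConfig 𝒞 ∅ :=
  ⟨[], fun _ => List.mem_nil_iff _, IsJustified.nil⟩

theorem IsConfig.union (hC : IsConfig 𝒞 C) (hD : IsConfig 𝒞 D) : IsConfig 𝒞 (C ∪ D) := by
  obtain ⟨l, mem_l, hl⟩ := hC
  obtain ⟨m, mem_m, hm⟩ := hD
  have hlm : IsJustified 𝒞 (C ∪ D) (l ++ m) :=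
    .append (.mono Set.subset_union_left hl) (.mono Set.subset_union_right hm)
  exact ⟨l ++ m, fun e => List.mem_append.trans (or_congr (mem_l e) (mem_m e)), hlm⟩

theorem IsConfig.sUnion {S : Set (Set E)} (hS : ∀ C ∈ S, IsConfig 𝒞 C) :
    IsConfig 𝒞 (⋃₀ S) :=
  have supClosed : SupClosed {C | IsConfig 𝒞 C} := fun _ hC _ hD => hC.union hD
  supClosed.sSup_mem S.toFinite IsConfig.empty hS

end

theorem isConfig_setOf_reachable (𝒞 : Contract E A) : IsConfig 𝒞 {e | Reachable 𝒞 e} :=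
  IsConfig.sUnion (S := {C | IsConfig 𝒞 C}) fun _ hC => hC

/-- Every reachable set of events is contained in some configuration. -/
theorem reachable_subset_config (𝒞 : Contract E A) (X : Set E)
    (hX : ∀ e ∈ X, Reachable 𝒞 e) :
    ∃ C, IsConfig 𝒞 C ∧ X ⊆ C :=
  ⟨{e | Reachable 𝒞 e}, isConfig_setOf_reachable 𝒞, hX⟩
end

section
/- For every contract 𝒞: if an agreement on 𝒞 exists, then for every participant A ∈ 𝒜 and every state X ⊆ E, either ok(A,X) holds, or some participant is culpable in X. -/
variable {E A : Type} [Fintype E] [Fintype A]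

/-- An agreement: a configuration in which every participant is satisfied. -/
def Agreement (𝒞 : Contract E A) (C : Set E) : Prop :=
  IsConfig 𝒞 C ∧ ∀ a : A, 𝒞.ok a C

/-- The duties of participant `a` in state `X`: events `e ∉ X` of `a`, belonging
to some configuration `C`, such that either `X ⊢ e`, or no event of `C ∖ X` is
`⊢`-enabled by `X` and `e` is `⊩`-enabled by some `D ⊆ C ∪ X`. -/
def Duties (𝒞 : Contract E A) (a : A) (X : Set E) : Set E :=
  {e | e ∉ X ∧ 𝒞.pi e = a ∧ ∃ C, IsConfig 𝒞 C ∧ e ∈ C ∧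
    (𝒞.en X e ∨ ((¬ ∃ e' ∈ C \ X, 𝒞.en X e') ∧ ∃ D ⊆ C ∪ X, 𝒞.cen D e))}

/-- A participant is culpable in `X` iff she has some duties in `X`. -/
def Culpable (𝒞 : Contract E A) (a : A) (X : Set E) : Prop :=
  (Duties 𝒞 a X).Nonempty

theorem exists_get_notMem_and_take_subset {α : Type*} {l : List α} {X : Set α}
    (h : ∃ e ∈ l, e ∉ X) :
    ∃ i : Fin l.length, l.get i ∉ X ∧ {e | e ∈ l.take i} ⊆ X := by
  classical
  have hlt : l.findIdx (· ∉ X) < l.length :=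
    List.findIdx_lt_length_of_exists (by simpa only [decide_eq_true_eq] using h)
  refine ⟨⟨_, hlt⟩, by simpa using List.findIdx_getElem (w := hlt), fun e he ↦ ?_⟩
  obtain ⟨j, hj, rfl⟩ := List.mem_take_iff_getElem.1 he
  simpa using List.not_of_lt_findIdx (hj.trans_le (min_le_left _ _))

namespace IsConfig

variable {𝒞 : Contract E A} {C X : Set E}

theorem exists_en_or_cen (hC : IsConfig 𝒞 C) (hCX : ¬C ⊆ X) :
    ∃ e ∈ C \ X, 𝒞.en X e ∨ 𝒞.cen C e := by
  obtain ⟨l, hl, henabled⟩ := hC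
  have hout : ∃ e ∈ l, e ∉ X := by simpa only [hl] using Set.not_subset.1 hCX
  obtain ⟨i, hiX, hpred⟩ := exists_get_notMem_and_take_subset hout
  have hiC : l.get i ∈ C := (hl _).1 (l.get_mem i)
  -- The predecessors of the first event outside `X` all lie in `X`, so saturation lifts `⊢` to `X`.
  exact ⟨l.get i, ⟨hiC, hiX⟩, (henabled i).imp_left fun hen ↦ 𝒞.en_sat _ X _ hen hpred⟩

theorem exists_mem_duties (hC : IsConfig 𝒞 C) (hCX : ¬C ⊆ X) :
    ∃ e ∈ C, e ∈ Duties 𝒞 (𝒞.pi e) X := by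
  by_cases hen : ∃ e ∈ C \ X, 𝒞.en X e
  · obtain ⟨e, ⟨heC, he⟩, heX⟩ := hen
    exact ⟨e, heC, he, rfl, C, hC, heC, Or.inl heX⟩
  · obtain ⟨e, ⟨heC, he⟩, henabled⟩ := hC.exists_en_or_cen hCX
    have hcen : 𝒞.cen C e := henabled.resolve_left fun heX ↦ hen ⟨e, ⟨heC, he⟩, heX⟩
    exact ⟨e, heC, he, rfl, C, hC, heC, Or.inr ⟨hen, C, Set.subset_union_left, hcen⟩⟩

end IsConfig

theorem ok_or_culpable_general {𝒞 : Contract E A} {a : A} {C : Set E} (hC : IsConfig 𝒞 C)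
    (hok : 𝒞.ok a C) (X : Set E) : 𝒞.ok a X ∨ ∃ b : A, Culpable 𝒞 b X := by
  by_cases hCX : C ⊆ X
  · exact Or.inl (𝒞.ok_sat a C X hok hCX)
  · obtain ⟨e, -, he⟩ := hC.exists_mem_duties hCX
    exact Or.inr ⟨𝒞.pi e, e, he⟩

/-- If an agreement exists then, in every state, every participant is either
satisfied or someone is culpable. -/
theorem ok_or_culpable (𝒞 : Contract E A) (h : ∃ C, Agreement 𝒞 C) :
    ∀ (a : A) (X : Set E), 𝒞.ok a X ∨ ∃ b : A, Culpable 𝒞 b X := by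
  obtain ⟨C, hC, hok⟩ := h
  exact fun a ↦ ok_or_culpable_general hC (hok a)
end

section
/- For every contract 𝒞 and every event e ∈ E: e is reachable in 𝒞 if and only if [𝒞] ⊢_PCL π(e) says e, where [𝒞] is the PCL encoding of 𝒞. -/
variable {E A : Type} [Fintype E] [Fintype A]

/-- Formulae of PCL: intuitionistic logic plus contractual implication `cimp`
(`↠`) and the indexed modality `says`. Atoms are events in `E`. -/
inductive PCLFormula (E A : Type) where
  | top : PCLFormula E A
  | bot : PCLFormula E A
  | atom : E → PCLFormula E A
  | and : PCLFormula E A → PCLFormula E A → PCLFormula E A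
  | or : PCLFormula E A → PCLFormula E A → PCLFormula E A
  | imp : PCLFormula E A → PCLFormula E A → PCLFormula E A
  | cimp : PCLFormula E A → PCLFormula E A → PCLFormula E A
  | says : A → PCLFormula E A → PCLFormula E A

/-- Hilbert-style provability for PCL: an intuitionistic base (axioms plus
modus ponens) extended with the axioms for `↠` and `says`. `PCLProof Γ φ`
formalises `Γ ⊢_PCL φ`. -/
inductive PCLProof {E A : Type} (Γ : Set (PCLFormula E A)) : PCLFormula E A → Prop
  | hyp {φ} : φ ∈ Γ → PCLProof Γ φ
  | mp {φ ψ} : PCLProof Γ (.imp φ ψ) → PCLProof Γ φ → PCLProof Γ ψ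
  | axK {φ ψ} : PCLProof Γ (.imp φ (.imp ψ φ))
  | axS {φ ψ χ} :
      PCLProof Γ (.imp (.imp φ (.imp ψ χ)) (.imp (.imp φ ψ) (.imp φ χ)))
  | axTop : PCLProof Γ .top
  | axBot {φ} : PCLProof Γ (.imp .bot φ)
  | axAndI {φ ψ} : PCLProof Γ (.imp φ (.imp ψ (.and φ ψ)))
  | axAndE1 {φ ψ} : PCLProof Γ (.imp (.and φ ψ) φ)
  | axAndE2 {φ ψ} : PCLProof Γ (.imp (.and φ ψ) ψ)
  | axOrI1 {φ ψ} : PCLProof Γ (.imp φ (.or φ ψ))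
  | axOrI2 {φ ψ} : PCLProof Γ (.imp ψ (.or φ ψ))
  | axOrE {φ ψ χ} :
      PCLProof Γ (.imp (.imp φ χ) (.imp (.imp ψ χ) (.imp (.or φ ψ) χ)))
  | axCTop : PCLProof Γ (.cimp .top .top)
  | axCFix {φ} : PCLProof Γ (.imp (.cimp φ φ) φ)
  | axCPrePost {φ φ' ψ ψ'} :
      PCLProof Γ (.imp (.imp φ' φ)
        (.imp (.cimp φ ψ) (.imp (.imp ψ ψ') (.cimp φ' ψ'))))
  | axSaysI {a φ} : PCLProof Γ (.imp φ (.says a φ))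
  | axSaysIdem {a φ} : PCLProof Γ (.imp (.says a (.says a φ)) (.says a φ))
  | axSaysMono {a φ ψ} :
      PCLProof Γ (.imp (.imp φ ψ) (.imp (.says a φ) (.says a ψ)))

/-- The conjunction `⋀_{d ∈ D} (pi d) says d`. -/
noncomputable def conjSays (𝒞 : Contract E A) (D : Set E) : PCLFormula E A :=
  ((Set.toFinite D).toFinset.toList.map
    (fun d => PCLFormula.says (𝒞.pi d) (.atom d))).foldr PCLFormula.and .top

/-- The PCL encoding `[𝒞]` of a contract, as the set of the encodings
`π(a) says ((⋀_{d∈D} π(d) says d) [∘] a)` of all its enablings. -/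
noncomputable def encodeContract (𝒞 : Contract E A) : Set (PCLFormula E A) :=
  {f | ∃ D e, 𝒞.en D e ∧
        f = .says (𝒞.pi e) (.imp (conjSays 𝒞 D) (.atom e))} ∪
  {f | ∃ D e, 𝒞.cen D e ∧
        f = .says (𝒞.pi e) (.cimp (conjSays 𝒞 D) (.atom e))}

/-!
Consider the monotone operator sending `C` to the set of events derivable by `⊢` once `C` may be
used for `⊩`. Configurations are post-fixed points of it, its greatest fixed point is itself a
configuration, and so the reachable events are exactly this fixed point. Granting in addition the
events of a set `X` for free gives `reach X`, whose crucial property is circular: if `D ⊩ e` and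
`D ⊆ reach ({e} ∪ X)`, then `e ∈ reach X`.

To see that provable events are reachable, interpret PCL in a Heyting algebra by reading `φ ↠ ψ` as
`(ψ → φ) → ψ` and ignoring `says`. In the algebra of upward closed families of sets of events, with
the atom `e` interpreted as `{X | e ∈ reach X}`, the circular property is precisely the validity of
the encoding of `D ⊩ e`. Conversely, `e ∈ reach X` is turned into a derivation from `[𝒞]` and the
granted events by descending induction on `X`: a `⊩`-step towards `e` may assume `e` itself, which
enlarges `X`.
-/

namespace PCLProof

variable {α ι : Type} {Γ : Set (PCLFormula α ι)} {φ ψ χ : PCLFormula α ι} {a : ι}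

theorem imp_of_right (h : PCLProof Γ ψ) : PCLProof Γ (.imp φ ψ) :=
  .mp .axK h

theorem imp_mp (h : PCLProof Γ (.imp χ (.imp φ ψ))) (hφ : PCLProof Γ (.imp χ φ)) :
    PCLProof Γ (.imp χ ψ) :=
  .mp (.mp .axS h) hφ

theorem imp_refl (φ : PCLFormula α ι) : PCLProof Γ (.imp φ φ) :=
  imp_mp .axK (.axK (ψ := .top))

theorem deduction (h : PCLProof (insert φ Γ) ψ) : PCLProof Γ (.imp φ ψ) := by
  induction h with
  | hyp hmem =>
    rcases hmem with rfl | hmem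
    · exact imp_refl _
    · exact imp_of_right (.hyp hmem)
  | mp _ _ ih₁ ih₂ => exact imp_mp ih₁ ih₂
  | axK => exact imp_of_right .axK
  | axS => exact imp_of_right .axS
  | axTop => exact imp_of_right .axTop
  | axBot => exact imp_of_right .axBot
  | axAndI => exact imp_of_right .axAndI
  | axAndE1 => exact imp_of_right .axAndE1
  | axAndE2 => exact imp_of_right .axAndE2
  | axOrI1 => exact imp_of_right .axOrI1
  | axOrI2 => exact imp_of_right .axOrI2
  | axOrE => exact imp_of_right .axOrE
  | axCTop => exact imp_of_right .axCTop
  | axCFix => exact imp_of_right .axCFix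
  | axCPrePost => exact imp_of_right .axCPrePost
  | axSaysI => exact imp_of_right .axSaysI
  | axSaysIdem => exact imp_of_right .axSaysIdem
  | axSaysMono => exact imp_of_right .axSaysMono

theorem foldr_and {l : List (PCLFormula α ι)} (h : ∀ φ ∈ l, PCLProof Γ φ) :
    PCLProof Γ (l.foldr .and .top) := by
  induction l with
  | nil => exact .axTop
  | cons φ l ih =>
    rw [List.forall_mem_cons] at h
    exact .mp (.mp .axAndI h.1) (ih h.2)

theorem says_mp (h : PCLProof Γ (.says a (.imp φ ψ))) (hφ : PCLProof Γ φ) :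
    PCLProof Γ (.says a ψ) :=
  .mp (.mp .axSaysMono (imp_mp (imp_refl _) (imp_of_right hφ))) h

theorem says_of_says_cimp (h : PCLProof Γ (.says a (.cimp φ ψ)))
    (hφ : PCLProof Γ (.imp (.says a ψ) φ)) : PCLProof Γ (.says a ψ) := by
  have weaken : PCLProof Γ (.imp (.cimp φ ψ) (.cimp (.says a ψ) (.says a ψ))) :=
    imp_mp (.mp .axCPrePost hφ) (imp_of_right .axSaysI)
  have says_of_cimp : PCLProof Γ (.imp (.cimp φ ψ) (.says a ψ)) :=
    imp_mp (imp_of_right .axCFix) weaken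
  exact .mp .axSaysIdem (.mp (.mp .axSaysMono says_of_cimp) h)

end PCLProof

namespace PCLFormula

variable {α ι : Type} {H : Type*} [HeytingAlgebra H]

/-- The interpretation of PCL in a Heyting algebra, under a valuation `v` of the atoms. The modality
is ignored, and `φ ↠ ψ` is read as `(ψ → φ) → ψ`, which satisfies all the axioms of `↠`. -/
def interp (v : α → H) : PCLFormula α ι → H
  | top => ⊤
  | bot => ⊥
  | atom e => v e
  | and φ ψ => interp v φ ⊓ interp v ψ
  | or φ ψ => interp v φ ⊔ interp v ψ
  | imp φ ψ => interp v φ ⇨ interp v ψ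
  | cimp φ ψ => (interp v ψ ⇨ interp v φ) ⇨ interp v ψ
  | .says _ φ => interp v φ

theorem le_interp_foldr_and {v : α → H} {c : H} {l : List (PCLFormula α ι)} :
    c ≤ interp v (l.foldr .and .top) ↔ ∀ φ ∈ l, c ≤ interp v φ := by
  induction l with
  | nil => simp [interp]
  | cons φ l ih => simp [interp, ih]

end PCLFormula

section GeneralizedHeytingAlgebra

variable {H : Type*} [GeneralizedHeytingAlgebra H] {a a' b b' c : H}

theorem le_of_le_himp (h : c ≤ a ⇨ b) (ha : c ≤ a) : c ≤ b :=
  (le_inf h ha).trans himp_inf_le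

theorem himp_himp_le_himp_himp_himp : a ⇨ b ⇨ c ≤ (a ⇨ b) ⇨ a ⇨ c := by
  rw [le_himp_iff, ← himp_inf_distrib]
  exact himp_le_himp_left himp_inf_le

theorem himp_inf_himp_himp_inf_himp_le :
    (a' ⇨ a) ⊓ ((b ⇨ a) ⇨ b) ⊓ (b ⇨ b') ≤ (b' ⇨ a') ⇨ b' := by
  rw [le_himp_iff]
  set c := (a' ⇨ a) ⊓ ((b ⇨ a) ⇨ b) ⊓ (b ⇨ b') ⊓ (b' ⇨ a')
  have ha : c ≤ a' ⇨ a := inf_le_left.trans (inf_le_left.trans inf_le_left)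
  have hab : c ≤ (b ⇨ a) ⇨ b := inf_le_left.trans (inf_le_left.trans inf_le_right)
  have hb : c ≤ b ⇨ b' := inf_le_left.trans inf_le_right
  have hba : c ≤ b ⇨ a :=
    calc c ≤ (b ⇨ b') ⊓ (b' ⇨ a') ⊓ (a' ⇨ a) := le_inf (le_inf hb inf_le_right) ha
      _ ≤ (b ⇨ a') ⊓ (a' ⇨ a) := inf_le_inf_right _ (himp_triangle _ _ _)
      _ ≤ b ⇨ a := himp_triangle _ _ _
  exact le_of_le_himp hb (le_of_le_himp hab hba)

end GeneralizedHeytingAlgebra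

theorem PCLProof.le_interp {α ι : Type} {H : Type*} [HeytingAlgebra H] {Γ : Set (PCLFormula α ι)}
    {φ : PCLFormula α ι} (h : PCLProof Γ φ) {v : α → H} {c : H}
    (hΓ : ∀ γ ∈ Γ, c ≤ γ.interp v) : c ≤ φ.interp v := by
  have le_himp_of_le {x y : H} (hxy : x ≤ y) : c ≤ x ⇨ y := le_himp_iff.2 (inf_le_of_right_le hxy)
  induction h with
  | hyp hmem => exact hΓ _ hmem
  | mp _ _ ih₁ ih₂ => exact le_of_le_himp ih₁ ih₂
  | axK => exact le_himp_of_le le_himp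
  | axS => exact le_himp_of_le himp_himp_le_himp_himp_himp
  | axTop => exact le_top
  | axBot => exact le_himp_of_le bot_le
  | axAndI => exact le_himp_of_le (le_himp_iff.2 le_rfl)
  | axAndE1 => exact le_himp_of_le inf_le_left
  | axAndE2 => exact le_himp_of_le inf_le_right
  | axOrI1 => exact le_himp_of_le le_sup_left
  | axOrI2 => exact le_himp_of_le le_sup_right
  | axOrE => exact le_himp_of_le (le_himp_iff.2 (sup_himp_distrib _ _ _).ge)
  | axCTop => exact le_himp_of_le le_top
  | axCFix => exact le_himp_of_le (by simp [PCLFormula.interp])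
  | axCPrePost =>
    exact le_himp_of_le (le_himp_iff.2 (le_himp_iff.2 himp_inf_himp_himp_inf_himp_le))
  | axSaysI => exact le_himp_of_le le_rfl
  | axSaysIdem => exact le_himp_of_le le_rfl
  | axSaysMono => exact le_himp_of_le le_rfl

namespace Contract

variable (𝒞 : Contract E A)

/-- Derivability of events in the contract `𝒞`, from the events of `X`, which are granted, by means
of enablings and of circular enablings that may rely on all the events of `C`. -/
inductive Derivable (X C : Set E) : E → Prop
  | granted {e} : e ∈ X → Derivable X C e
  | en {D e} : 𝒞.en D e → (∀ d ∈ D, Derivable X C d) → Derivable X C e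
  | cen {e} : 𝒞.cen C e → Derivable X C e

variable {𝒞} {X Y C C' D : Set E} {e : E}

theorem Derivable.trans (h : 𝒞.Derivable X C e) (hX : ∀ x ∈ X, 𝒞.Derivable Y C x) :
    𝒞.Derivable Y C e := by
  induction h with
  | granted he => exact hX _ he
  | en hen _ ih => exact .en hen ih
  | cen hcen => exact .cen hcen

theorem Derivable.mono_right (hC : C ⊆ C') (h : 𝒞.Derivable X C e) : 𝒞.Derivable X C' e := by
  induction h with
  | granted he => exact .granted he
  | en hen _ ih => exact .en hen ih
  | cen hcen => exact .cen (𝒞.cen_sat _ _ _ hcen hC)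

variable (𝒞) in
/-- The operator sending a set `C` of events to the set of events derivable from `X` when circular
enablings may rely on `C`. -/
def derive (X : Set E) : Set E →o Set E where
  toFun C := {e | 𝒞.Derivable X C e}
  monotone' _ _ hC _ h := h.mono_right hC

theorem derive_mono : Monotone 𝒞.derive :=
  fun _ _ hXY _ _ h ↦ h.trans fun _ hx ↦ .granted (hXY hx)

variable (𝒞) in
/-- The events that can be reached in `𝒞` once the events of `X` have been granted. -/
def reach (X : Set E) : Set E :=
  (𝒞.derive X).gfp

theorem derive_reach (X : Set E) : 𝒞.derive X (𝒞.reach X) = 𝒞.reach X :=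
  (𝒞.derive X).map_gfp

theorem mem_reach_iff_derivable : e ∈ 𝒞.reach X ↔ 𝒞.Derivable X (𝒞.reach X) e := by
  conv_lhs => rw [← derive_reach]
  rfl

theorem reach_mono : Monotone 𝒞.reach :=
  OrderHom.gfp.monotone.comp derive_mono

theorem subset_reach (X : Set E) : X ⊆ 𝒞.reach X :=
  fun _ hx ↦ mem_reach_iff_derivable.2 (.granted hx)

theorem mem_reach_of_en (hen : 𝒞.en D e) (hD : D ⊆ 𝒞.reach X) : e ∈ 𝒞.reach X :=
  mem_reach_iff_derivable.2 (.en hen fun _ hd ↦ mem_reach_iff_derivable.1 (hD hd))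

theorem mem_reach_of_cen (hcen : 𝒞.cen D e) (hD : D ⊆ 𝒞.reach (insert e X)) :
    e ∈ 𝒞.reach X := by
  suffices 𝒞.reach (insert e X) ⊆ 𝒞.reach X from
    this (subset_reach _ (Set.mem_insert e X))
  have he : 𝒞.Derivable X (𝒞.reach (insert e X)) e := .cen (𝒞.cen_sat _ _ _ hcen hD)
  refine (𝒞.derive X).le_gfp fun c hc ↦ (mem_reach_iff_derivable.1 hc).trans ?_
  rintro x (rfl | hx)
  exacts [he, .granted hx]

variable (𝒞) in
/-- The sequences of events appearing in the definition of configurations: each event is enabled by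
its predecessors, or circularly enabled by `C`. -/
def IsTrace (C : Set E) (l : List E) : Prop :=
  ∀ i : Fin l.length, 𝒞.en {e | e ∈ l.take i.1} (l.get i) ∨ 𝒞.cen C (l.get i)

theorem IsTrace.derivable {l : List E} (hl : 𝒞.IsTrace C l) (he : e ∈ l) :
    𝒞.Derivable ∅ C e := by
  obtain ⟨n, hn, rfl⟩ := List.getElem_of_mem he
  clear he
  induction n using Nat.strong_induction_on with
  | _ n ih =>
    refine (hl ⟨n, hn⟩).elim (fun hen ↦ .en hen fun d hd ↦ ?_) .cen
    obtain ⟨i, hi, rfl⟩ := List.mem_take_iff_getElem.1 hd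
    exact ih i (by grind) (by grind)

theorem IsTrace.concat {l : List E} (hl : 𝒞.IsTrace C l)
    (he : 𝒞.en {x | x ∈ l} e ∨ 𝒞.cen C e) : 𝒞.IsTrace C (l ++ [e]) := by
  rintro ⟨i, hi⟩
  obtain hi | rfl : i < l.length ∨ i = l.length := by grind
  · simpa [List.take_append_of_le_length hi.le, hi] using hl ⟨i, hi⟩
  · simpa using he

theorem exists_isTrace_derive (C : Set E) :
    ∃ l, 𝒞.IsTrace C l ∧ ∀ e, e ∈ l ↔ e ∈ 𝒞.derive ∅ C := by
  obtain ⟨_, ⟨⟨l, hl, rfl⟩, hmax⟩⟩ := Set.Finite.exists_maximal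
    (Set.toFinite ((fun l : List E ↦ {e | e ∈ l}) '' {l | 𝒞.IsTrace C l}))
    ⟨_, [], fun i ↦ i.elim0, rfl⟩
  have mem_of_enabled {e : E} (he : 𝒞.en {x | x ∈ l} e ∨ 𝒞.cen C e) : e ∈ l :=
    hmax ⟨l ++ [e], hl.concat he, rfl⟩ (fun x hx ↦ List.mem_append_left _ hx)
      (List.mem_append_right l (List.mem_singleton_self e))
  refine ⟨l, hl, fun e ↦ ⟨hl.derivable, fun he ↦ ?_⟩⟩
  induction he with
  | granted he => exact he.elim
  | en hen _ ih => exact mem_of_enabled (.inl (𝒞.en_sat _ _ _ hen ih))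
  | cen hcen => exact mem_of_enabled (.inr hcen)

theorem isConfig_reach_empty : IsConfig 𝒞 (𝒞.reach ∅) := by
  obtain ⟨l, hl, hmem⟩ := 𝒞.exists_isTrace_derive (𝒞.reach ∅)
  exact ⟨l, by rwa [derive_reach] at hmem, hl⟩

theorem _root_.IsConfig.subset_reach_empty (h : IsConfig 𝒞 C) : C ⊆ 𝒞.reach ∅ := by
  obtain ⟨l, hmem, hl : 𝒞.IsTrace C l⟩ := h
  exact (𝒞.derive ∅).le_gfp fun e he ↦ hl.derivable ((hmem e).2 he)

theorem reachable_iff_mem_reach_empty : Reachable 𝒞 e ↔ e ∈ 𝒞.reach ∅ :=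
  ⟨fun ⟨_, hC, he⟩ ↦ hC.subset_reach_empty he, fun he ↦ ⟨_, isConfig_reach_empty, he⟩⟩

variable (𝒞) in
/-- The formula `π(e) says e`, which stands in PCL for the event `e` having happened. -/
def ownerSays (e : E) : PCLFormula E A :=
  .says (𝒞.pi e) (.atom e)

variable (𝒞) in
/-- The encoding of `𝒞` together with the formulae granting the events of `X`. -/
def encodeWith (X : Set E) : Set (PCLFormula E A) :=
  encodeContract 𝒞 ∪ 𝒞.ownerSays '' X

theorem encodeWith_empty : 𝒞.encodeWith ∅ = encodeContract 𝒞 := by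
  simp [encodeWith]

theorem encodeWith_insert :
    𝒞.encodeWith (insert e X) = insert (𝒞.ownerSays e) (𝒞.encodeWith X) := by
  rw [encodeWith, Set.image_insert_eq, Set.union_insert, encodeWith]

theorem provable_conjSays {Γ : Set (PCLFormula E A)} (h : ∀ d ∈ D, PCLProof Γ (𝒞.ownerSays d)) :
    PCLProof Γ (conjSays 𝒞 D) :=
  .foldr_and (by simpa [ownerSays] using h)

theorem provable_of_en (hen : 𝒞.en D e)
    (hD : ∀ d ∈ D, PCLProof (𝒞.encodeWith X) (𝒞.ownerSays d)) :
    PCLProof (𝒞.encodeWith X) (𝒞.ownerSays e) :=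
  .says_mp (.hyp (.inl (.inl ⟨D, e, hen, rfl⟩))) (provable_conjSays hD)

theorem provable_of_cen (hcen : 𝒞.cen D e)
    (hD : ∀ d ∈ D, PCLProof (𝒞.encodeWith (insert e X)) (𝒞.ownerSays d)) :
    PCLProof (𝒞.encodeWith X) (𝒞.ownerSays e) := by
  rw [encodeWith_insert] at hD
  exact .says_of_says_cimp (.hyp (.inl (.inr ⟨D, e, hcen, rfl⟩))) (provable_conjSays hD).deduction

theorem provable_of_mem_reach (he : e ∈ 𝒞.reach X) :
    PCLProof (𝒞.encodeWith X) (𝒞.ownerSays e) := by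
  induction X using WellFoundedGT.induction generalizing e with
  | ind X ih =>
    rw [mem_reach_iff_derivable] at he
    induction he with
    | granted he => exact .hyp (.inr ⟨_, he, rfl⟩)
    | en hen _ ihD => exact provable_of_en hen ihD
    | @cen e hcen =>
      by_cases heX : e ∈ X
      · exact .hyp (.inr ⟨e, heX, rfl⟩)
      · exact provable_of_cen hcen fun d hd ↦
          ih _ (Set.ssubset_insert heX) (reach_mono (Set.subset_insert e X) hd)

open OrderDual LowerSet

variable (𝒞) in
/-- The valuation of events in the Heyting algebra of upward closed families of sets of events: `e`
holds at `X` if it can be reached once `X` has been granted. These families are encoded as lower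
sets of the order dual because upper sets are ordered by reverse inclusion in Mathlib. -/
def reachVal (e : E) : LowerSet (Set E)ᵒᵈ where
  carrier := {X | e ∈ 𝒞.reach (ofDual X)}
  lower' _ _ hXY he := reach_mono hXY he

theorem mem_reachVal {X : (Set E)ᵒᵈ} : X ∈ 𝒞.reachVal e ↔ e ∈ 𝒞.reach (ofDual X) :=
  Iff.rfl

theorem mem_interp_conjSays {X : (Set E)ᵒᵈ} :
    X ∈ (conjSays 𝒞 D).interp 𝒞.reachVal ↔ D ⊆ 𝒞.reach (ofDual X) := by
  rw [← Iic_le, conjSays, PCLFormula.le_interp_foldr_and]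
  simp [PCLFormula.interp, mem_reachVal, Set.subset_def]

theorem interp_conjSays_le_reachVal (hen : 𝒞.en D e) :
    (conjSays 𝒞 D).interp 𝒞.reachVal ≤ 𝒞.reachVal e :=
  fun _ hX ↦ mem_reach_of_en hen (mem_interp_conjSays.1 hX)

theorem reachVal_himp_interp_conjSays_le (hcen : 𝒞.cen D e) :
    𝒞.reachVal e ⇨ (conjSays 𝒞 D).interp 𝒞.reachVal ≤ 𝒞.reachVal e := by
  intro X hX
  let Y : (Set E)ᵒᵈ := toDual (insert e (ofDual X))
  have hY : Y ∈ 𝒞.reachVal e ⇨ (conjSays 𝒞 D).interp 𝒞.reachVal :=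
    LowerSet.lower _ (show Y ≤ X from Set.subset_insert e (ofDual X)) hX
  have heY : Y ∈ 𝒞.reachVal e := mem_reachVal.2 (subset_reach _ (Set.mem_insert e _))
  have hDY : Y ∈ (conjSays 𝒞 D).interp 𝒞.reachVal :=
    Iic_le.1 (le_of_le_himp (Iic_le.2 hY) (Iic_le.2 heY))
  exact mem_reach_of_cen hcen (mem_interp_conjSays.1 hDY)

theorem interp_reachVal_of_mem_encodeContract {φ : PCLFormula E A} (hφ : φ ∈ encodeContract 𝒞) :
    φ.interp 𝒞.reachVal = ⊤ := by
  rcases hφ with ⟨D, e, hen, rfl⟩ | ⟨D, e, hcen, rfl⟩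
  · exact himp_eq_top_iff.2 (interp_conjSays_le_reachVal hen)
  · exact himp_eq_top_iff.2 (reachVal_himp_interp_conjSays_le hcen)

theorem mem_reach_of_provable (h : PCLProof (𝒞.encodeWith X) (𝒞.ownerSays e)) :
    e ∈ 𝒞.reach X := by
  suffices Iic (toDual X) ≤ (𝒞.ownerSays e).interp 𝒞.reachVal from mem_reachVal.1 (Iic_le.1 this)
  refine h.le_interp ?_
  rintro φ (hφ | ⟨x, hx, rfl⟩)
  · exact le_top.trans_eq (interp_reachVal_of_mem_encodeContract hφ).symm
  · exact Iic_le.2 (mem_reachVal.2 (subset_reach X hx))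

theorem mem_reach_iff_provable :
    e ∈ 𝒞.reach X ↔ PCLProof (𝒞.encodeWith X) (𝒞.ownerSays e) :=
  ⟨provable_of_mem_reach, mem_reach_of_provable⟩

end Contract

/-- An event is reachable iff `[𝒞] ⊢_PCL π(e) says e`. -/
theorem reachable_iff_pcl_provable (𝒞 : Contract E A) (e : E) :
    Reachable 𝒞 e ↔
      PCLProof (encodeContract 𝒞) (.says (𝒞.pi e) (.atom e)) := by
  rw [Contract.reachable_iff_mem_reach_empty, Contract.mem_reach_iff_provable,
    Contract.encodeWith_empty, Contract.ownerSays]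
end

section
/- For every contract 𝒞, every X ⊆ E and every event e: e is X-reachable (i.e., e belongs to some X-configuration of 𝒞) if and only if e ∈ ℛ(X), where ℛ is the inductively defined family of sets. -/
variable {E A : Type} [Fintype E] [Fintype A]

/-- `C` is an `X`-configuration: `X ⊆ C` and the events of `C` can be ordered so
that each one is in `X` (taken "on credit"), or `⊢`-enabled by its predecessors,
or `⊩`-enabled by `C`. -/
def IsXConfig (𝒞 : Contract E A) (X C : Set E) : Prop :=
  X ⊆ C ∧ ∃ l : List E, (∀ e, e ∈ l ↔ e ∈ C) ∧
    ∀ i : Fin l.length,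
      l.get i ∈ X ∨ 𝒞.en {e | e ∈ l.take i.1} (l.get i) ∨ 𝒞.cen C (l.get i)

/-- The inductively defined family `ℛ(X)`: `e ∈ ℛ(X)` if `e ∈ X`, or `D ⊢ e`
with `D ⊆ ℛ(X)`, or `D ⊩ e` with `D ⊆ ℛ(X ∪ {e})`. -/
inductive RSet {E A : Type} [Fintype E] [Fintype A] (𝒞 : Contract E A) :
    Set E → E → Prop
  | base {X : Set E} {e : E} : e ∈ X → RSet 𝒞 X e
  | en {X D : Set E} {e : E} : 𝒞.en D e → (∀ d ∈ D, RSet 𝒞 X d) → RSet 𝒞 X e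
  | cen {X D : Set E} {e : E} :
      𝒞.cen D e → (∀ d ∈ D, RSet 𝒞 (X ∪ {e}) d) → RSet 𝒞 X e

/-!
Credits are conservative: if `Y ⊆ ℛ(X)` then `ℛ(Y) ⊆ ℛ(X)`. In particular `e ∈ ℛ(X)` implies
`ℛ(X ∪ {e}) = ℛ(X)`, so an event put into `ℛ(X)` by the circular rule satisfies `ℛ(X) ⊩ e`. Hence
no proper subset of `ℛ(X)` is closed under justification relative to `ℛ(X)`, and enumerating
greedily shows that `ℛ(X)` is itself an `X`-configuration.

Conversely, an `X`-configuration `C` is also an `(X ∪ {e})`-configuration for each `e ∈ C`.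
Enlarging `X` inside the finite set `C`, we may assume `C ⊆ ℛ(X ∪ {e})` whenever `e ∈ C \ X`, and
then `C ⊩ e` gives `e ∈ ℛ(X)`. So `ℛ(X)` is the greatest `X`-configuration.
-/

section EnabledList

variable {α : Type*} {P : Set α → α → Prop}

/-- A causal ordering for the relation `P D e` ("the past `D` justifies `e`"): every entry of the
list is justified by the set of entries strictly before it. Repetitions are allowed. -/
def EnabledList (P : Set α → α → Prop) (l : List α) : Prop :=
  ∀ i : Fin l.length, P {x | x ∈ l.take i.1} (l.get i)

theorem EnabledList.nil : EnabledList P [] :=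
  fun i => i.elim0

theorem EnabledList.concat {l : List α} {e : α} (hl : EnabledList P l)
    (he : P {x | x ∈ l} e) : EnabledList P (l ++ [e]) := by
  rintro ⟨i, hi⟩
  obtain hil | rfl : i < l.length ∨ i = l.length := by
    rw [List.length_append, List.length_singleton] at hi
    lia
  · simpa [List.getElem_append_left hil, List.take_append_of_le_length hil.le] using hl ⟨i, hil⟩
  · simpa using he

theorem EnabledList.forall_mem {l : List α} (hl : EnabledList P l) {Q : α → Prop}
    (hQ : ∀ e ∈ l, ∀ D, P D e → (∀ d ∈ D, Q d) → Q e) : ∀ e ∈ l, Q e := by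
  have forall_get (i : ℕ) (hi : i < l.length) : Q l[i] := by
    induction i using Nat.strong_induction_on with
    | _ i ih =>
      refine hQ _ (List.getElem_mem hi) _ (hl ⟨i, hi⟩) fun d hd => ?_
      obtain ⟨j, hj, rfl⟩ := List.mem_take_iff_getElem.1 hd
      exact ih j (lt_min_iff.1 hj).1 _
  intro e he
  obtain ⟨i, hi, rfl⟩ := List.getElem_of_mem he
  exact forall_get i hi

theorem exists_enabledList_of_progress {S : Set α} (hS : S.Finite)
    (progress : ∀ D ⊂ S, ∃ e ∈ S \ D, P D e) :
    ∃ l, (∀ e, e ∈ l ↔ e ∈ S) ∧ EnabledList P l := by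
  let enumerable : Set (Set α) := {T | T ⊆ S ∧ ∃ l, {e | e ∈ l} = T ∧ EnabledList P l}
  have enumerable_finite : enumerable.Finite := hS.finite_subsets.subset fun _ hT => hT.1
  have empty_enumerable : ∅ ∈ enumerable := ⟨Set.empty_subset S, [], by simp, .nil⟩
  obtain ⟨T, ⟨hTS, l, rfl, hl⟩, hmax⟩ := enumerable_finite.exists_maximal ⟨∅, empty_enumerable⟩
  obtain hlS | hlS := hTS.eq_or_ssubset
  · exact ⟨l, Set.ext_iff.1 hlS, hl⟩
  obtain ⟨e, ⟨heS, hel⟩, he⟩ := progress _ hlS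
  have insert_enumerable : insert e {x | x ∈ l} ∈ enumerable :=
    ⟨Set.insert_subset heS hTS, l ++ [e], by ext; simp [or_comm], hl.concat he⟩
  exact absurd (hmax insert_enumerable (Set.subset_insert _ _) (Set.mem_insert _ _)) hel

end EnabledList

section Contract

variable {𝒞 : Contract E A} {X Y C : Set E} {e : E}

theorem RSet.mono (h : RSet 𝒞 X e) (hXY : X ⊆ Y) : RSet 𝒞 Y e := by
  induction h generalizing Y with
  | base he => exact .base (hXY he)
  | en hD _ ih => exact .en hD fun d hd => ih d hd hXY
  | cen hD _ ih => exact .cen hD fun d hd => ih d hd (Set.union_subset_union_left _ hXY)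

theorem RSet.trans (h : RSet 𝒞 Y e) (hY : ∀ y ∈ Y, RSet 𝒞 X y) : RSet 𝒞 X e := by
  induction h generalizing X with
  | base he => exact hY _ he
  | en hD _ ih => exact .en hD fun d hd => ih d hd hY
  | cen hD _ ih =>
    refine .cen hD fun d hd => ih d hd ?_
    rintro y (hy | hy)
    · exact (hY y hy).mono Set.subset_union_left
    · exact .base (.inr hy)

theorem RSet.of_union_singleton {d : E} (hd : RSet 𝒞 (X ∪ {e}) d) (he : RSet 𝒞 X e) :
    RSet 𝒞 X d := by
  refine hd.trans ?_
  rintro y (hy | rfl)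
  · exact .base hy
  · exact he

theorem RSet.mem_of_closed {T : Set E} (h : RSet 𝒞 X e)
    (closed : ∀ d, RSet 𝒞 X d → d ∈ X ∨ 𝒞.en T d ∨ 𝒞.cen {x | RSet 𝒞 X x} d → d ∈ T) :
    e ∈ T := by
  induction h with
  | base he => exact closed _ (.base he) (.inl he)
  | en hD hDR ih =>
    exact closed _ (.en hD hDR) (.inr (.inl (𝒞.en_sat _ _ _ hD fun d hd => ih d hd closed)))
  | @cen X D e hD hDR _ =>
    have he : RSet 𝒞 X e := .cen hD hDR
    exact closed _ he
      (.inr (.inr (𝒞.cen_sat _ _ _ hD fun d hd => (hDR d hd).of_union_singleton he)))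

theorem isXConfig_setOf_RSet (𝒞 : Contract E A) (X : Set E) :
    IsXConfig 𝒞 X {e | RSet 𝒞 X e} := by
  refine ⟨fun _ => .base, exists_enabledList_of_progress
    (P := fun D e => e ∈ X ∨ 𝒞.en D e ∨ 𝒞.cen {x | RSet 𝒞 X x} e) (Set.toFinite _) ?_⟩
  intro D hD
  by_contra! stuck
  refine hD.not_subset fun e (he : RSet 𝒞 X e) => he.mem_of_closed fun d hd justified => ?_
  by_contra hdD
  exact absurd justified (by simpa using stuck d ⟨hd, hdD⟩)

theorem IsXConfig.union_singleton (hC : IsXConfig 𝒞 X C) (he : e ∈ C) :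
    IsXConfig 𝒞 (X ∪ {e}) C := by
  obtain ⟨hXC, l, hlC, hl⟩ := hC
  exact ⟨Set.union_subset hXC (Set.singleton_subset_iff.2 he), l, hlC,
    fun i => (hl i).imp_left .inl⟩

theorem IsXConfig.subset_setOf_RSet (hC : IsXConfig 𝒞 X C) : C ⊆ {e | RSet 𝒞 X e} := by
  induction X using WellFoundedGT.induction with
  | ind X ih =>
    have of_cen (e : E) (he : e ∈ C) (hCe : 𝒞.cen C e) : RSet 𝒞 X e := by
      by_cases heX : e ∈ X
      · exact .base heX
      have hX : X ⊂ X ∪ {e} := by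
        rw [Set.union_singleton]
        exact Set.ssubset_insert heX
      exact .cen hCe (ih _ hX (hC.union_singleton he))
    obtain ⟨-, l, hlC, hl⟩ := hC
    have forall_mem : ∀ e ∈ l, RSet 𝒞 X e := by
      refine EnabledList.forall_mem (P := fun D e => e ∈ X ∨ 𝒞.en D e ∨ 𝒞.cen C e) hl ?_
      rintro e he D (heX | hD | hCe) hDR
      · exact .base heX
      · exact .en hD hDR
      · exact of_cen e ((hlC e).1 he) hCe
    exact fun e he => forall_mem e ((hlC e).2 he)

end Contract

/-- An event is `X`-reachable iff it belongs to `ℛ(X)`. -/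
theorem xreachable_iff_RSet (𝒞 : Contract E A) (X : Set E) (e : E) :
    (∃ C, IsXConfig 𝒞 X C ∧ e ∈ C) ↔ RSet 𝒞 X e := by
  constructor
  · rintro ⟨C, hC, he⟩
    exact hC.subset_setOf_RSet he
  · exact fun he => ⟨_, isXConfig_setOf_RSet 𝒞 X, he⟩
end
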